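/- Let F be an orientation-preserving C^r-diffeomorphism (r ≥ 2) from a domain Ω ⊆ ℝ² onto its image F(Ω) ⊆ Ω, and let Λ ⊆ Ω be a compact totally invariant set such that F restricted to Λ is uniquely ergodic, with unique invariant Borel probability measure μ. Suppose λ ∈ (0,1) satisfies ∫_Λ log Jac_pF dμ(p) = log λ, and that for μ-almost every p ∈ Λ, lim_{n→∞} (1/n) log ‖D_pF^n‖ = 0. Then for every η > 0 there exists N ∈ ℕ such that for all n ≥ N the map F^n is η-homogeneous on Λ with rate λ^n: for every p ∈ Λ and every direction E at p, (λ^n)^{1+η} < ‖D_pF^n|_E‖ < (λ^n)^{−η} and (λ^n)^{1+η} < Jac_pF^n < (λ^n)^{1−η}. -/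

import Mathlib

open Real Function Set Filter MeasureTheory

noncomputable section

/-- The Euclidean plane `ℝ²` with the Euclidean norm. -/
abbrev E2 := EuclideanSpace ℝ (Fin 2)

/-- The Jacobian determinant of `F` at `p`. -/
def jacAt (F : E2 → E2) (p : E2) : ℝ :=
  LinearMap.det (fderiv ℝ F p).toLinearMap

/-- The angle between the directions (lines) spanned by the unit vectors `u` and `v`. -/
def lineAngle (u v : E2) : ℝ :=
  Real.arccos |(@inner ℝ E2 _ u v)|

/-- The unit vector spanning the image under `T` of the direction spanned by `v`. -/
def pushDir (T : E2 →L[ℝ] E2) (v : E2) : E2 :=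
  ‖T v‖⁻¹ • T v

/-- The `m`-th iterate (`m : ℤ`), computed using `F` forwards and its inverse `G` backwards. -/
def iterZ (F G : E2 → E2) (m : ℤ) : E2 → E2 :=
  if 0 ≤ m then F^[m.toNat] else G^[(-m).toNat]

/-- `p` is `N`-times forward `(L, ε)_v`-regular along the direction of the unit vector `v`:
`L⁻¹ λ^((1+ε)n) ≤ (Jac_p Fⁿ)^s / ‖D_pFⁿ|_E‖^(s-1) ≤ L λ^((1-ε)n)` for `s ∈ {-r, r-1}`,
`1 ≤ n ≤ N`. -/
def FwdRegV (F : E2 → E2) (p : E2) (lam L ε : ℝ) (r : ℕ) (N : ℕ∞) (v : E2) : Prop :=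
  ∀ n : ℕ, 1 ≤ n → (n : ℕ∞) ≤ N → ∀ s : ℤ, s = -(r : ℤ) ∨ s = (r : ℤ) - 1 →
    L⁻¹ * lam ^ ((1 + ε) * (n : ℝ)) ≤
        jacAt (F^[n]) p ^ s / ‖fderiv ℝ (F^[n]) p v‖ ^ (s - 1) ∧
      jacAt (F^[n]) p ^ s / ‖fderiv ℝ (F^[n]) p v‖ ^ (s - 1) ≤
        L * lam ^ ((1 - ε) * (n : ℝ))

/-- `p` is `N`-times forward `(L, ε)_h`-regular along the direction of the unit vector `v`:
`L⁻¹ λ^((1+ε)n) ≤ Jac_p Fⁿ / ‖D_pFⁿ|_E‖^(s+1) ≤ L λ^((1-ε)n)` for `s ∈ {-r+1, r}`,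
`1 ≤ n ≤ N`. -/
def FwdRegH (F : E2 → E2) (p : E2) (lam L ε : ℝ) (r : ℕ) (N : ℕ∞) (v : E2) : Prop :=
  ∀ n : ℕ, 1 ≤ n → (n : ℕ∞) ≤ N → ∀ s : ℤ, s = -(r : ℤ) + 1 ∨ s = (r : ℤ) →
    L⁻¹ * lam ^ ((1 + ε) * (n : ℝ)) ≤
        jacAt (F^[n]) p / ‖fderiv ℝ (F^[n]) p v‖ ^ (s + 1) ∧
      jacAt (F^[n]) p / ‖fderiv ℝ (F^[n]) p v‖ ^ (s + 1) ≤
        L * lam ^ ((1 - ε) * (n : ℝ))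

/-- `p` is `M`-times backward `(L, ε)_v`-regular along the direction of the unit vector `v`;
the backward iterates `F^(-n)` are given by the iterates of the inverse map `G`. -/
def BwdRegV (G : E2 → E2) (p : E2) (lam L ε : ℝ) (r : ℕ) (M : ℕ∞) (v : E2) : Prop :=
  ∀ n : ℕ, 1 ≤ n → (n : ℕ∞) ≤ M → ∀ s : ℤ, s = -(r : ℤ) ∨ s = (r : ℤ) - 1 →
    L⁻¹ * lam ^ (-(1 - ε) * (n : ℝ)) ≤
        jacAt (G^[n]) p ^ s / ‖fderiv ℝ (G^[n]) p v‖ ^ (s - 1) ∧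
      jacAt (G^[n]) p ^ s / ‖fderiv ℝ (G^[n]) p v‖ ^ (s - 1) ≤
        L * lam ^ (-(1 + ε) * (n : ℝ))

/-- `p` is `M`-times backward `(L, ε)_h`-regular along the direction of the unit vector `v`. -/
def BwdRegH (G : E2 → E2) (p : E2) (lam L ε : ℝ) (r : ℕ) (M : ℕ∞) (v : E2) : Prop :=
  ∀ n : ℕ, 1 ≤ n → (n : ℕ∞) ≤ M → ∀ s : ℤ, s = -(r : ℤ) + 1 ∨ s = (r : ℤ) →
    L⁻¹ * lam ^ (-(1 - ε) * (n : ℝ)) ≤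
        jacAt (G^[n]) p / ‖fderiv ℝ (G^[n]) p v‖ ^ (s + 1) ∧
      jacAt (G^[n]) p / ‖fderiv ℝ (G^[n]) p v‖ ^ (s + 1) ≤
        L * lam ^ (-(1 + ε) * (n : ℝ))

/-- `F` is `η`-homogeneous on `Λ` with rate `lam`. -/
def Homog (F : E2 → E2) (Λ : Set E2) (lam η : ℝ) : Prop :=
  ∀ p ∈ Λ,
    (∀ v : E2, ‖v‖ = 1 →
      lam ^ (1 + η) < ‖fderiv ℝ F p v‖ ∧ ‖fderiv ℝ F p v‖ < lam ^ (-η)) ∧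
    lam ^ (1 + η) < jacAt F p ∧ jacAt F p < lam ^ (1 - η)

/-- Simplified (homogeneous) forward `(L, δ)_v`-regularity:
`‖D_pFⁿ|_E‖ ≤ L λ^((1-δ)n)` for `1 ≤ n ≤ N`. -/
def SFwdV (F : E2 → E2) (p : E2) (lam L δ : ℝ) (N : ℕ∞) (v : E2) : Prop :=
  ∀ n : ℕ, 1 ≤ n → (n : ℕ∞) ≤ N →
    ‖fderiv ℝ (F^[n]) p v‖ ≤ L * lam ^ ((1 - δ) * (n : ℝ))

/-- Simplified (homogeneous) backward `(L, δ)_v`-regularity: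
`‖D_pF^(-n)|_E‖ ≥ L⁻¹ λ^(-(1-δ)n)` for `1 ≤ n ≤ M`. -/
def SBwdV (G : E2 → E2) (p : E2) (lam L δ : ℝ) (M : ℕ∞) (v : E2) : Prop :=
  ∀ n : ℕ, 1 ≤ n → (n : ℕ∞) ≤ M →
    L⁻¹ * lam ^ (-(1 - δ) * (n : ℝ)) ≤ ‖fderiv ℝ (G^[n]) p v‖

/-- Simplified (homogeneous) forward `(L, δ)_h`-regularity:
`‖D_pFⁿ|_E‖ ≥ L⁻¹ λ^(δn)` for `1 ≤ n ≤ N`. -/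
def SFwdH (F : E2 → E2) (p : E2) (lam L δ : ℝ) (N : ℕ∞) (v : E2) : Prop :=
  ∀ n : ℕ, 1 ≤ n → (n : ℕ∞) ≤ N →
    L⁻¹ * lam ^ (δ * (n : ℝ)) ≤ ‖fderiv ℝ (F^[n]) p v‖

/-- Simplified (homogeneous) backward `(L, δ)_h`-regularity:
`‖D_pF^(-n)|_E‖ ≤ L λ^(-δn)` for `1 ≤ n ≤ M`. -/
def SBwdH (G : E2 → E2) (p : E2) (lam L δ : ℝ) (M : ℕ∞) (v : E2) : Prop :=
  ∀ n : ℕ, 1 ≤ n → (n : ℕ∞) ≤ M →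
    ‖fderiv ℝ (G^[n]) p v‖ ≤ L * lam ^ (-δ * (n : ℝ))

theorem empirical_exists {X : Type*} [MeasurableSpace X] [TopologicalSpace X] [BorelSpace X]
    [CompactSpace X] (T : X → X) (n : ℕ) (hn : 0 < n) (x : X) :
    ∃ P : ProbabilityMeasure X, ∀ g : C(X, ℝ),
      ∫ y, g y ∂(P : Measure X) = birkhoffAverage ℝ T g n x := by
  have hn' : (n : ENNReal) ≠ 0 := by exact_mod_cast hn.ne'
  refine ⟨⟨(n : ENNReal)⁻¹ • ∑ i ∈ Finset.range n, Measure.dirac (T^[i] x), ⟨?_⟩⟩, ?_⟩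
  · simp [ENNReal.inv_mul_cancel hn' (ENNReal.natCast_ne_top n)]
  · intro g
    have hg : StronglyMeasurable g := g.continuous.stronglyMeasurable
    simp only [ProbabilityMeasure.coe_mk]
    rw [integral_smul_measure, integral_finsetSum_measure]
    · simp [birkhoffAverage, birkhoffSum, integral_dirac' _ _ hg]
    · intro i hi
      exact integrable_dirac' hg (by simp)

theorem uniform_birkhoff {X : Type*} [MeasurableSpace X] [TopologicalSpace X] [BorelSpace X]
    [CompactSpace X] [T2Space X] [SecondCountableTopology X] (T : X → X) (hT : Continuous T)
    (μ : Measure X)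
    (huniq : ∀ ν : Measure X, IsProbabilityMeasure ν → ν.map T = ν → ν = μ)
    (f : X → ℝ) (hf : Continuous f) (ε : ℝ) (hε : 0 < ε) :
    ∃ N : ℕ, ∀ n, N ≤ n → ∀ x, |birkhoffAverage ℝ T f n x - ∫ y, f y ∂μ| < ε := by
  by_contra! hcon
  choose n hnN x hx using fun N : ℕ => hcon (N + 1)
  have hn : ∀ N, 0 < n N := fun N => lt_of_lt_of_le (Nat.succ_pos N) (hnN N)
  choose P hP using fun N => empirical_exists T (n N) (hn N) (x N)
  have hninf : Tendsto n atTop atTop :=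
    tendsto_atTop_mono (fun N => (Nat.le_succ N).trans (hnN N)) tendsto_id
  obtain ⟨ν, -, hν⟩ := (isCompact_univ (X := ProbabilityMeasure X)).ultrafilter_le_nhds
    ((hyperfilter ℕ).map P) (by simp)
  have hν' : Tendsto P (hyperfilter ℕ : Filter ℕ) (nhds ν) := hν
  rw [ProbabilityMeasure.tendsto_iff_forall_integral_tendsto] at hν'
  have hlim : ∀ g : C(X, ℝ), Tendsto (fun N => birkhoffAverage ℝ T g (n N) (x N))
      (hyperfilter ℕ : Filter ℕ) (nhds (∫ y, g y ∂(ν : Measure X))) := by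
    intro g
    have := hν' (BoundedContinuousFunction.mkOfCompact g)
    simpa [hP] using this
  have hle : (hyperfilter ℕ : Filter ℕ) ≤ atTop := by
    rw [← Nat.cofinite_eq_atTop]; exact hyperfilter_le_cofinite
  have hinv : (ν : Measure X).map T = ν := by
    have : IsProbabilityMeasure ((ν : Measure X).map T) :=
      Measure.isProbabilityMeasure_map hT.aemeasurable
    apply ext_of_forall_integral_eq_of_IsFiniteMeasure
    intro g
    rw [integral_map hT.aemeasurable g.continuous.aestronglyMeasurable]
    have h1 := hlim ⟨fun y => g (T y), g.continuous.comp hT⟩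
    have h2 := hlim ⟨g, g.continuous⟩
    have h3 : Tendsto (fun N => (n N : ℝ)⁻¹ * (2 * ‖g‖)) (hyperfilter ℕ : Filter ℕ) (nhds 0) := by
      have : Tendsto (fun N => (n N : ℝ)⁻¹ * (2 * ‖g‖)) atTop (nhds (0 * (2 * ‖g‖))) :=
        (tendsto_inv_atTop_zero.comp (tendsto_natCast_atTop_atTop.comp hninf)).mul_const _
      rw [zero_mul] at this
      exact this.mono_left hle
    have h4 : Tendsto (fun N => birkhoffAverage ℝ T (fun y => g (T y)) (n N) (x N) -
        birkhoffAverage ℝ T g (n N) (x N)) (hyperfilter ℕ : Filter ℕ) (nhds 0) := by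
      refine squeeze_zero_norm (fun N => ?_) h3
      have e : birkhoffAverage ℝ T (fun y => g (T y)) (n N) (x N) =
          birkhoffAverage ℝ T g (n N) (T (x N)) := by
        simp only [birkhoffAverage, birkhoffSum, ← iterate_succ_apply, ← iterate_succ_apply']
      rw [e, birkhoffAverage_apply_sub_birkhoffAverage, norm_smul, norm_inv, Real.norm_natCast]
      gcongr
      calc _ ≤ ‖g (T^[n N] (x N))‖ + ‖g (x N)‖ := norm_sub_le _ _
        _ ≤ ‖g‖ + ‖g‖ := add_le_add (g.norm_coe_le_norm _) (g.norm_coe_le_norm _)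
        _ = _ := by ring
    have h5 := tendsto_nhds_unique h4 (h1.sub h2)
    simp only [ContinuousMap.coe_mk] at h5
    linarith
  have hνμ : (ν : Measure X) = μ := huniq ν inferInstance hinv
  have h := hlim ⟨f, hf⟩
  rw [hνμ] at h
  have h6 : Tendsto (fun N => |birkhoffAverage ℝ T f (n N) (x N) - ∫ y, f y ∂μ|)
      (hyperfilter ℕ : Filter ℕ) (nhds |∫ y, f y ∂μ - ∫ y, f y ∂μ|) :=
    (h.sub_const _).abs
  have h7 := ge_of_tendsto' h6 hx
  simp at h7
  linarith

/-- subadditive averaging -/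
theorem subadd_avg {X : Type*} (T : X → X) (f : ℕ → X → ℝ) (C : ℝ) (m : ℕ)
    (hsub : ∀ a b x, f (a + b) x ≤ f a x + f b (T^[a] x))
    (hC : ∀ a x, a ≤ m → f a x ≤ C) (n : ℕ) (x : X) :
    (m : ℝ) * f (n + m) x ≤ birkhoffSum T (f m) n x + 2 * (m * C) := by
  have hW : ∀ n x, ∑ j ∈ Finset.range m, f (n + (m - j)) (T^[j] x) ≤
      birkhoffSum T (f m) n x + m * C := by
    intro n
    induction n with
    | zero =>
      intro x
      simp only [zero_add, birkhoffSum_zero]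
      calc _ ≤ ∑ j ∈ Finset.range m, C :=
            Finset.sum_le_sum fun j _ => hC _ _ (Nat.sub_le _ _)
        _ = _ := by simp
    | succ n ih =>
      intro x
      have h1 := ih (T x)
      rw [birkhoffSum_succ']
      have h2 : ∑ j ∈ Finset.range m, f (n + 1 + (m - j)) (T^[j] x) + f (n + 1) (T^[m] x) =
          ∑ j ∈ Finset.range m, f (n + (m - j)) (T^[j] (T x)) + f (n + 1 + m) x := by
        have e1 := Finset.sum_range_succ (fun j => f (n + 1 + (m - j)) (T^[j] x)) m
        have e2 := Finset.sum_range_succ' (fun j => f (n + 1 + (m - j)) (T^[j] x)) m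
        have e3 : ∑ j ∈ Finset.range m, f (n + (m - j)) (T^[j] (T x)) =
            ∑ j ∈ Finset.range m, f (n + 1 + (m - (j + 1))) (T^[j + 1] x) := by
          refine Finset.sum_congr rfl fun j hj => ?_
          rw [Finset.mem_range] at hj
          rw [iterate_succ_apply]
          congr 1
          omega
        rw [e3]
        simp at e1 e2
        simp only [iterate_succ_apply] at e2 ⊢
        linarith
      have h3 := hsub m (n + 1) x
      rw [Nat.add_comm m (n + 1)] at h3
      linarith
  have h1 : (m : ℝ) * f (n + m) x ≤
      ∑ j ∈ Finset.range m, (f (n + (m - j)) (T^[j] x) + C) := by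
    calc (m : ℝ) * f (n + m) x = ∑ j ∈ Finset.range m, f (n + m) x := by simp
      _ ≤ _ := by
        refine Finset.sum_le_sum fun j hj => ?_
        rw [Finset.mem_range] at hj
        have := hsub j (n + (m - j)) x
        rw [show j + (n + (m - j)) = n + m by omega] at this
        linarith [hC j x hj.le]
  rw [Finset.sum_add_distrib] at h1
  simp at h1
  linarith [hW n x]

/-- uniform upper bound of a subadditive process. -/
theorem uniform_subadd {X : Type*} [MeasurableSpace X] [TopologicalSpace X] [BorelSpace X]
    [CompactSpace X] [T2Space X] [SecondCountableTopology X] (T : X → X) (hT : Continuous T)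
    (μ : Measure X) [IsProbabilityMeasure μ]
    (huniq : ∀ ν : Measure X, IsProbabilityMeasure ν → ν.map T = ν → ν = μ)
    (f : ℕ → X → ℝ) (hf : ∀ n, Continuous (f n)) (K : ℝ)
    (hsub : ∀ a b x, f (a + b) x ≤ f a x + f b (T^[a] x))
    (hK : ∀ n x, |f n x| ≤ n * K)
    (hlim : ∀ᵐ x ∂μ, Tendsto (fun n : ℕ => f n x / n) atTop (nhds 0))
    (ε : ℝ) (hε : 0 < ε) :
    ∃ N : ℕ, ∀ n, N ≤ n → ∀ x, f n x < n * ε := by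
  have hX : Nonempty X := by
    by_contra h
    rw [not_nonempty_iff] at h
    have := measure_univ (μ := μ)
    rw [Set.univ_eq_empty_iff.2 h] at this
    simp at this
  have hK0 : 0 ≤ K := by
    obtain ⟨x⟩ := hX
    have := (abs_nonneg _).trans (hK 1 x)
    simpa using this
  have hint : Tendsto (fun n : ℕ => ∫ x, f n x / n ∂μ) atTop (nhds (∫ x, (0 : ℝ) ∂μ)) := by
    refine tendsto_integral_of_dominated_convergence (fun _ => K)
      (fun n => ((hf n).div_const _).aestronglyMeasurable) (integrable_const _) ?_ hlim
    intro n
    refine Eventually.of_forall fun x => ?_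
    rw [norm_div, Real.norm_natCast, Real.norm_eq_abs]
    exact div_le_of_le_mul₀ (Nat.cast_nonneg _) hK0 (by linarith [hK n x])
  simp only [integral_zero] at hint
  obtain ⟨m, hm, hm0⟩ := ((hint.eventually (gt_mem_nhds (show 0 < ε / 4 by linarith))).and
    (eventually_gt_atTop 0)).exists
  have hmR : (0 : ℝ) < m := by exact_mod_cast hm0
  obtain ⟨N, hN⟩ := uniform_birkhoff T hT μ huniq (fun x => f m x / m) ((hf m).div_const _)
    (ε / 4) (by linarith)
  obtain ⟨M, hM⟩ := exists_nat_gt (2 * (m * K) / (ε / 2))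
  refine ⟨N + M + m + 1, fun n hn x => ?_⟩
  obtain ⟨k, rfl⟩ : ∃ k, n = k + m := ⟨n - m, by omega⟩
  have h1 := (abs_lt.1 (hN k (by omega) x)).2
  have hk0 : (0 : ℝ) < k := by
    have : 0 < k := by omega
    exact_mod_cast this
  have h2 := subadd_avg T f (m * K) m hsub (fun a x ha => (le_abs_self _).trans
    ((hK a x).trans (by gcongr))) k x
  have h3 : birkhoffAverage ℝ T (fun x => f m x / m) k x =
      birkhoffSum T (f m) k x / (k * m) := by
    simp only [birkhoffAverage, birkhoffSum, ← Finset.sum_div, smul_eq_mul]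
    field_simp
  rw [h3] at h1
  have h4 : birkhoffSum T (f m) k x / (k * m) < ε / 2 := by linarith
  rw [div_lt_iff₀ (by positivity)] at h4
  have hMk : (M : ℝ) ≤ k := by
    have : M ≤ k := by omega
    exact_mod_cast this
  rw [div_lt_iff₀ (by linarith)] at hM
  have h5 : 2 * (m * K) < k * (ε / 2) := hM.trans_le (by gcongr)
  have h6 : (m : ℝ) * f (k + m) x < m * (k * ε) := by
    have : 2 * (m * (m * K)) < m * (k * (ε / 2)) := by
      have := mul_lt_mul_of_pos_left h5 hmR
      linarith
    linarith
  have h7 := lt_of_mul_lt_mul_left h6 hmR.le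
  push_cast
  nlinarith [mul_pos hmR hε]

theorem det_le_mul (A : E2 →L[ℝ] E2) (v : E2) (hv : ‖v‖ = 1) :
    LinearMap.det A.toLinearMap ≤ ‖A v‖ * ‖A‖ := by
  have hcs : ∀ x y : E2, x 0 * y 1 - x 1 * y 0 ≤ ‖x‖ * ‖y‖ := by
    intro x y
    refine (abs_le_of_sq_le_sq' ?_ (by positivity)).2
    rw [mul_pow, EuclideanSpace.real_norm_sq_eq, EuclideanSpace.real_norm_sq_eq]
    simp only [Fin.sum_univ_two]
    nlinarith [sq_nonneg (x 0 * y 0 + x 1 * y 1)]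
  have hv2 : v 0 ^ 2 + v 1 ^ 2 = 1 := by
    have := EuclideanSpace.real_norm_sq_eq v
    rw [hv] at this
    simp only [Fin.sum_univ_two] at this
    linarith
  set w : E2 := !₂[-v 1, v 0] with hw
  have hwn : ‖w‖ = 1 := by
    have := EuclideanSpace.real_norm_sq_eq w
    simp [hw, Fin.sum_univ_two] at this
    have h2 : ‖w‖ ^ 2 = 1 := by rw [this]; linarith
    exact (pow_eq_one_iff_of_nonneg (norm_nonneg _) two_ne_zero).1 h2
  let e : Fin 2 → E2 := fun i => EuclideanSpace.single i 1
  have hve : v = v 0 • e 0 + v 1 • e 1 := by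
    ext i; fin_cases i <;> simp [e]
  have hwe : w = (-v 1) • e 0 + v 0 • e 1 := by
    ext i; fin_cases i <;> simp [e, hw]
  have hdet : LinearMap.det A.toLinearMap = A (e 0) 0 * A (e 1) 1 - A (e 0) 1 * A (e 1) 0 := by
    rw [← LinearMap.det_toMatrix (EuclideanSpace.basisFun (Fin 2) ℝ).toBasis, Matrix.det_fin_two]
    simp [LinearMap.toMatrix_apply, e]
    ring
  have h1 := hcs (A v) (A w)
  have h2 : A v 0 * A w 1 - A v 1 * A w 0 = LinearMap.det A.toLinearMap := by
    have hAv : A v = v 0 • A (e 0) + v 1 • A (e 1) := by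
      rw [← map_smul, ← map_smul, ← map_add, ← hve]
    have hAw : A w = (-v 1) • A (e 0) + v 0 • A (e 1) := by
      rw [← map_smul, ← map_smul, ← map_add, ← hwe]
    rw [hAv, hAw, hdet]
    simp only [PiLp.add_apply, PiLp.smul_apply, smul_eq_mul]
    linear_combination (A (e 0) 0 * A (e 1) 1 - A (e 0) 1 * A (e 1) 0) * hv2
  rw [h2] at h1
  refine h1.trans ?_
  gcongr
  simpa [hwn] using A.le_opNorm w

theorem det_le_sq (A : E2 →L[ℝ] E2) : LinearMap.det A.toLinearMap ≤ ‖A‖ * ‖A‖ := by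
  have hv : ‖(EuclideanSpace.single 0 1 : E2)‖ = 1 := by simp
  refine (det_le_mul A _ hv).trans ?_
  gcongr
  simpa [hv] using A.le_opNorm (EuclideanSpace.single 0 1 : E2)

theorem contDiffOn_iter {Ω : Set E2} {F : E2 → E2} (hF : ContDiffOn ℝ 1 F Ω)
    (hm : MapsTo F Ω Ω) (n : ℕ) : ContDiffOn ℝ 1 (F^[n]) Ω := by
  induction n with
  | zero => exact contDiffOn_id
  | succ n ih => rw [iterate_succ]; exact ih.comp hF hm

theorem fderiv_iter_add {Ω : Set E2} {F : E2 → E2} (hΩ : IsOpen Ω) (hF : ContDiffOn ℝ 1 F Ω)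
    (hm : MapsTo F Ω Ω) (a b : ℕ) {p : E2} (hp : p ∈ Ω) :
    fderiv ℝ (F^[a + b]) p = (fderiv ℝ (F^[b]) (F^[a] p)).comp (fderiv ℝ (F^[a]) p) := by
  have hd : ∀ n, ∀ q ∈ Ω, DifferentiableAt ℝ (F^[n]) q := fun n q hq =>
    ((contDiffOn_iter hF hm n).differentiableOn one_ne_zero).differentiableAt (hΩ.mem_nhds hq)
  rw [add_comm, iterate_add]
  exact fderiv_comp p (hd b _ (hm.iterate a hp)) (hd a p hp)

theorem jac_iter {Ω : Set E2} {F : E2 → E2} (hΩ : IsOpen Ω) (hF : ContDiffOn ℝ 1 F Ω)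
    (hm : MapsTo F Ω Ω) (n : ℕ) {p : E2} (hp : p ∈ Ω) :
    jacAt (F^[n + 1]) p = jacAt F (F^[n] p) * jacAt (F^[n]) p := by
  simp only [jacAt, fderiv_iter_add hΩ hF hm n 1 hp, iterate_one]
  exact LinearMap.det_comp _ _

/-- **Homogeneity of large iterates from unique ergodicity.**
Let `F` be an orientation-preserving `C^r`-diffeomorphism (`r ≥ 2`) of a domain `Ω ⊆ ℝ²`
onto its image `F(Ω) ⊆ Ω`, and `Λ ⊆ Ω` a compact totally invariant set on which `F` is
uniquely ergodic with invariant probability measure `μ`. If `∫ log Jac_p F dμ = log λ` with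
`λ ∈ (0,1)` and for `μ`-a.e. `p` we have `(1/n) log ‖D_pFⁿ‖ → 0`, then for every `η > 0`
there is `N` such that for all `n ≥ N` the iterate `Fⁿ` is `η`-homogeneous on `Λ` with rate
`λⁿ`. -/
theorem homogeneity_from_unique_ergodicity (r : ℕ) (hr : 2 ≤ r)
    (Ω : Set E2) (F : E2 → E2) (Λ : Set E2) (lam : ℝ) (μ : Measure E2)
    (hΩ : IsOpen Ω) (hF : ContDiffOn ℝ r F Ω) (hFinj : Set.InjOn F Ω)
    (hFmaps : Set.MapsTo F Ω Ω) (horient : ∀ x ∈ Ω, 0 < jacAt F x)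
    (hΛΩ : Λ ⊆ Ω) (hΛc : IsCompact Λ) (hΛinv : F '' Λ = Λ)
    (hlam : 0 < lam) (hlam1 : lam < 1)
    (hμ : IsProbabilityMeasure μ) (hsupp : μ Λᶜ = 0)
    (hμinv : ∀ s : Set E2, MeasurableSet s → μ (F ⁻¹' s) = μ s)
    (huniq : ∀ ν : Measure E2, IsProbabilityMeasure ν → ν Λᶜ = 0 →
      (∀ s : Set E2, MeasurableSet s → ν (F ⁻¹' s) = ν s) → ν = μ)
    (hintegral : ∫ p, Real.log (jacAt F p) ∂μ = Real.log lam)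
    (hlyap : ∀ᵐ p ∂μ, Filter.Tendsto
      (fun n : ℕ => Real.log ‖fderiv ℝ (F^[n]) p‖ / (n : ℝ))
      Filter.atTop (nhds 0)) :
    ∀ η : ℝ, 0 < η → ∃ N : ℕ, ∀ n : ℕ, N ≤ n →
      Homog (F^[n]) Λ (lam ^ n) η := by
  intro η hη
  have hF1 : ContDiffOn ℝ 1 F Ω := hF.of_le (by exact_mod_cast (by omega : 1 ≤ r))
  have hfc : ∀ n, ContinuousOn (fun p => fderiv ℝ (F^[n]) p) Ω := fun n =>
    (contDiffOn_iter hF1 hFmaps n).continuousOn_fderiv_of_isOpen hΩ le_rfl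
  have hmapsΛ : MapsTo F Λ Λ := fun x hx => hΛinv ▸ mem_image_of_mem F hx
  have hjpos : ∀ n, ∀ p ∈ Ω, 0 < jacAt (F^[n]) p := by
    intro n
    induction n with
    | zero => intro p _; simp [jacAt]
    | succ n ih =>
      intro p hp
      rw [jac_iter hΩ hF1 hFmaps n hp]
      exact mul_pos (horient _ (hFmaps.iterate n hp)) (ih p hp)
  have hnpos : ∀ n, ∀ p ∈ Ω, 0 < ‖fderiv ℝ (F^[n]) p‖ := by
    intro n p hp
    have h1 := (hjpos n p hp).trans_le (det_le_sq _)
    by_contra h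
    have h0 : ‖fderiv ℝ (F^[n]) p‖ = 0 := le_antisymm (not_lt.1 h) (norm_nonneg _)
    rw [h0] at h1
    simp at h1
  -- the system restricted to `Λ`
  have hΛm : MeasurableSet Λ := hΛc.measurableSet
  have : CompactSpace Λ := isCompact_iff_compactSpace.1 hΛc
  let T : Λ → Λ := hmapsΛ.restrict F Λ Λ
  have hTit : ∀ n (x : Λ), ((T^[n] x : Λ) : E2) = F^[n] x := by
    intro n
    induction n with
    | zero => intro x; rfl
    | succ n ih => intro x; rw [iterate_succ_apply, iterate_succ_apply, ih]; rfl
  have hT : Continuous T := (hF1.continuousOn.mono hΛΩ).mapsToRestrict hmapsΛ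
  have hemb : MeasurableEmbedding (Subtype.val : Λ → E2) := MeasurableEmbedding.subtype_coe hΛm
  let μ' : Measure Λ := μ.comap Subtype.val
  have hrestr : μ.restrict Λ = μ := Measure.restrict_eq_self_of_ae_mem (by
    rw [ae_iff]; exact hsupp)
  have hmap : μ'.map Subtype.val = μ := by
    rw [show μ'.map Subtype.val = _ from map_comap_subtype_coe hΛm μ, hrestr]
  have hμ' : IsProbabilityMeasure μ' := by
    constructor
    rw [← preimage_univ (f := (Subtype.val : Λ → E2)), ← hemb.map_apply, hmap]
    exact measure_univ
  have huniq' : ∀ ν : Measure Λ, IsProbabilityMeasure ν → ν.map T = ν → ν = μ' := by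
    intro ν hν hinv
    have h1 : ν.map Subtype.val = μ := by
      refine huniq _ (Measure.isProbabilityMeasure_map measurable_subtype_coe.aemeasurable) ?_ ?_
      · rw [hemb.map_apply]; simp
      · intro s hs
        rw [hemb.map_apply, hemb.map_apply]
        conv_rhs => rw [← hinv, Measure.map_apply hT.measurable (measurable_subtype_coe hs)]
        rfl
    rw [← hmap] at h1
    ext s hs
    have := congrArg (fun m : Measure E2 => m (Subtype.val '' s)) h1
    simpa [hemb.map_apply, preimage_image_eq _ Subtype.val_injective] using this
  -- the Jacobian cocycle
  let J : Λ → ℝ := fun x => Real.log (jacAt F x)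
  have hJc : Continuous J := by
    have h1 : ContinuousOn (fun p => jacAt F p) Ω :=
      ContinuousLinearMap.continuous_det.comp_continuousOn (hfc 1)
    have h2 : Continuous fun x : Λ => jacAt F x := (h1.mono hΛΩ).restrict
    exact h2.log fun x => (horient _ (hΛΩ x.2)).ne'
  have hJint : ∫ x, J x ∂μ' = Real.log lam := by
    rw [← hintegral]
    conv_rhs => rw [← hmap, hemb.integral_map]
  have hJn : ∀ n (x : Λ), Real.log (jacAt (F^[n]) x) = birkhoffSum T J n x := by
    intro n x
    induction n with
    | zero => simp [jacAt]
    | succ n ih =>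
      rw [birkhoffSum_succ, ← ih, jac_iter hΩ hF1 hFmaps n (hΛΩ x.2),
        Real.log_mul (horient _ (hFmaps.iterate n (hΛΩ x.2))).ne' (hjpos n _ (hΛΩ x.2)).ne',
        add_comm]
      simp only [J, hTit]
  -- the norm cocycle
  let f : ℕ → Λ → ℝ := fun n x => Real.log ‖fderiv ℝ (F^[n]) x‖
  have hfcont : ∀ n, Continuous (f n) := fun n =>
    ((hfc n).mono hΛΩ).restrict.norm.log fun x => (hnpos n _ (hΛΩ x.2)).ne'
  have hsub : ∀ a b x, f (a + b) x ≤ f a x + f b (T^[a] x) := by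
    intro a b x
    simp only [f, hTit]
    rw [add_comm (Real.log _), ← Real.log_mul (hnpos b _ (hFmaps.iterate a (hΛΩ x.2))).ne'
      (hnpos a _ (hΛΩ x.2)).ne']
    refine Real.log_le_log (hnpos _ _ (hΛΩ x.2)) ?_
    rw [fderiv_iter_add hΩ hF1 hFmaps a b (hΛΩ x.2)]
    exact ContinuousLinearMap.opNorm_comp_le _ _
  have hbdd : ∀ g : Λ → ℝ, Continuous g → ∃ C, 0 ≤ C ∧ ∀ x, |g x| ≤ C := by
    intro g hg
    let g' := BoundedContinuousFunction.mkOfCompact (⟨g, hg⟩ : C(Λ, ℝ))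
    exact ⟨‖g'‖, norm_nonneg _, fun x => g'.norm_coe_le_norm x⟩
  obtain ⟨K1, hK10, hK1⟩ := hbdd J hJc
  obtain ⟨K2, hK20, hK2⟩ := hbdd (f 1) (hfcont 1)
  have hfup : ∀ n x, f n x ≤ n * K2 := by
    intro n
    induction n with
    | zero => intro x; simp [f]
    | succ n ih =>
      intro x
      have := hsub n 1 x
      have h2 := (le_abs_self _).trans (hK2 (T^[n] x))
      push_cast
      linarith [ih x]
  have hJlow : ∀ n x, -(n * K1) ≤ birkhoffSum T J n x := by
    intro n x
    have : ∑ i ∈ Finset.range n, (-K1) ≤ birkhoffSum T J n x :=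
      Finset.sum_le_sum fun i _ => (abs_le.1 (hK1 _)).1
    simpa using this
  have hflow : ∀ n x, birkhoffSum T J n x ≤ 2 * f n x := by
    intro n x
    have h1 := Real.log_le_log (hjpos n _ (hΛΩ x.2)) (det_le_sq (fderiv ℝ (F^[n]) x))
    rw [hJn, Real.log_mul (hnpos n _ (hΛΩ x.2)).ne' (hnpos n _ (hΛΩ x.2)).ne'] at h1
    simp only [f]
    linarith
  have hK : ∀ n x, |f n x| ≤ n * (K1 + K2) := by
    intro n x
    have hn : (0 : ℝ) ≤ n := Nat.cast_nonneg n
    have a1 := mul_nonneg hn hK10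
    have a2 := mul_nonneg hn hK20
    rw [abs_le]
    constructor
    · linarith [hflow n x, hJlow n x]
    · linarith [hfup n x]
  have hlim : ∀ᵐ x ∂μ', Tendsto (fun n : ℕ => f n x / n) atTop (nhds 0) := by
    rw [← hmap, hemb.ae_map_iff] at hlyap
    exact hlyap
  -- conclusion
  have hl : Real.log lam < 0 := Real.log_neg hlam hlam1
  have hε : 0 < η * (-Real.log lam) / 2 := by
    have := mul_pos hη (neg_pos.2 hl)
    linarith
  set ε := η * (-Real.log lam) / 2 with hεdef
  obtain ⟨N1, hN1⟩ := uniform_birkhoff T hT μ' huniq' J hJc ε hε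
  obtain ⟨N2, hN2⟩ := uniform_subadd T hT μ' huniq' f hfcont (K1 + K2) hsub hK hlim ε hε
  refine ⟨N1 + N2 + 1, fun n hn p hp => ?_⟩
  have hn0 : (0 : ℝ) < n := by
    have : 0 < n := by omega
    exact_mod_cast this
  have hpΩ := hΛΩ hp
  have h1 := hN1 n (by omega) ⟨p, hp⟩
  have h2 := hN2 n (by omega) ⟨p, hp⟩
  rw [hJint, birkhoffAverage, ← hJn, smul_eq_mul, abs_lt] at h1
  simp only [f] at h2
  have hpow : ∀ s : ℝ, (lam ^ n) ^ s = Real.exp (n * (s * Real.log lam)) := by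
    intro s
    rw [Real.rpow_def_of_pos (pow_pos hlam n), Real.log_pow]
    congr 1; ring
  have hj := hjpos n p hpΩ
  have hnp := hnpos n p hpΩ
  have hL : (n : ℝ) * (Real.log lam - ε) < Real.log (jacAt (F^[n]) p) ∧
      Real.log (jacAt (F^[n]) p) < n * (Real.log lam + ε) := by
    constructor
    · have := mul_lt_mul_of_pos_left h1.1 hn0
      rw [mul_sub, mul_inv_cancel_left₀ hn0.ne'] at this
      linarith
    · have := mul_lt_mul_of_pos_left h1.2 hn0
      rw [mul_sub, mul_inv_cancel_left₀ hn0.ne'] at this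
      linarith
  have hnε : 0 < n * ε := mul_pos hn0 hε
  have hηε : η * Real.log lam = -(2 * ε) := by rw [hεdef]; ring
  refine ⟨fun v hv => ?_, ?_, ?_⟩
  · have hvle : ‖fderiv ℝ (F^[n]) p v‖ ≤ ‖fderiv ℝ (F^[n]) p‖ := by
      simpa [hv] using (fderiv ℝ (F^[n]) p).le_opNorm v
    have hd := det_le_mul (fderiv ℝ (F^[n]) p) v hv
    have hvpos : 0 < ‖fderiv ℝ (F^[n]) p v‖ := by
      by_contra h
      have h0 : ‖fderiv ℝ (F^[n]) p v‖ = 0 := le_antisymm (not_lt.1 h) (norm_nonneg _)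
      rw [h0, zero_mul] at hd
      exact absurd hj (not_lt.2 hd)
    have hd' := Real.log_le_log hj hd
    rw [Real.log_mul hvpos.ne' hnp.ne'] at hd'
    constructor
    · rw [hpow, ← Real.lt_log_iff_exp_lt hvpos]
      have e : (n : ℝ) * ((1 + η) * Real.log lam) = n * (Real.log lam - ε) - n * ε := by
        rw [add_mul, hηε]; ring
      linarith [hL.1]
    · rw [hpow, ← Real.log_lt_iff_lt_exp hvpos]
      have e : (n : ℝ) * (-η * Real.log lam) = n * ε + n * ε := by
        rw [neg_mul, hηε]; ring
      have := Real.log_le_log hvpos hvle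
      linarith
  · rw [hpow, ← Real.lt_log_iff_exp_lt hj]
    have e : (n : ℝ) * ((1 + η) * Real.log lam) = n * (Real.log lam - ε) - n * ε := by
      rw [add_mul, hηε]; ring
    linarith [hL.1]
  · rw [hpow, ← Real.log_lt_iff_lt_exp hj]
    have e : (n : ℝ) * ((1 - η) * Real.log lam) = n * (Real.log lam + ε) + n * ε := by
      rw [sub_mul, hηε]; ring
    linarith [hL.2]
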